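/- Let X be a proper CAT(0) space with base-point 𝔬 and let b be a geodesic ray based at 𝔬. Then b is κ-contracting if and only if there exists a constant c > 0 such that for all x, y ∈ X with d(x,y) < d(x,b), one has d(x_b, y_b) ≤ c·κ(‖x_b‖). -/

import Mathlib

open Set Metric Filter ENNReal

noncomputable section

/-- The set of points lying on a geodesic from `x` to `y`; in a uniquely geodesic space
(such as a CAT(0) space) this is the geodesic segment `[x,y]`. -/
def seg {X : Type*} [MetricSpace X] (x y : X) : Set X :=
  {z | dist x z + dist z y = dist x y}

/-- `X` is a geodesic metric space. -/
def GeodesicSpace (X : Type*) [MetricSpace X] : Prop :=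
  ∀ x y : X, ∃ γ : ℝ → X, γ 0 = x ∧ γ (dist x y) = y ∧
    ∀ s ∈ Icc (0:ℝ) (dist x y), ∀ t ∈ Icc (0:ℝ) (dist x y), dist (γ s) (γ t) = |s - t|

/-- `X` is a CAT(0) space: a geodesic metric space satisfying the CN (Bruhat–Tits)
inequality (comparison of triangles with Euclidean ones). -/
def IsCAT0 (X : Type*) [MetricSpace X] : Prop :=
  GeodesicSpace X ∧ ∀ x y z m : X, dist y m = dist y z / 2 → dist m z = dist y z / 2 →
    dist x m ^ 2 ≤ (dist x y ^ 2 + dist x z ^ 2) / 2 - dist y z ^ 2 / 4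

/-- `b` restricted to `[0,∞)` is a geodesic ray (an isometric embedding of `[0,∞)`). -/
def IsGeodesicRay {X : Type*} [MetricSpace X] (b : ℝ → X) : Prop :=
  ∀ s t : ℝ, 0 ≤ s → 0 ≤ t → dist (b s) (b t) = |s - t|

/-- The image of the geodesic ray `b`. -/
def rayIm {X : Type*} [MetricSpace X] (b : ℝ → X) : Set X := b '' Ici 0

/-- `κ` is a sublinear function: monotone increasing, concave, `≥ 1`, with `κ(t)/t → 0`. -/
structure IsSublinearFn (κ : ℝ → ℝ) : Prop where
  one_le : ∀ t : ℝ, 1 ≤ κ t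
  mono : Monotone κ
  concave : ConcaveOn ℝ (Ici 0) κ
  sublinear : Tendsto (fun t => κ t / t) atTop (nhds 0)

/-- `π` is the nearest-point projection onto the geodesic ray `b`:
`π x` lies on `b` and realizes the distance from `x` to `b`. -/
def IsProj {X : Type*} [MetricSpace X] (b : ℝ → X) (π : X → X) : Prop :=
  ∀ x : X, π x ∈ rayIm b ∧ dist x (π x) = infDist x (rayIm b)

/-- The geodesic ray `b` (with projection `π`) is `κ`-contracting: there is `c ≥ 0` such
that whenever `d(x,y) ≤ d(x,b)` we have `d(x_b, y_b) ≤ c·κ(‖x‖)`. -/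
def KappaContracting {X : Type*} [MetricSpace X] (κ : ℝ → ℝ) (o : X) (b : ℝ → X)
    (π : X → X) : Prop :=
  ∃ c ≥ (0:ℝ), ∀ x y : X, dist x y ≤ infDist x (rayIm b) →
    dist (π x) (π y) ≤ c * κ (dist o x)

/-- `b` is `κ`-contracting with contracting constant `c` (projection form, Lemma 2.6):
whenever `d(x,y) < d(x,b)` we have `d(x_b, y_b) ≤ c·κ(‖x_b‖)`. -/
def KappaContractingWith {X : Type*} [MetricSpace X] (κ : ℝ → ℝ) (o : X) (b : ℝ → X)
    (π : X → X) (c : ℝ) : Prop :=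
  0 ≤ c ∧ ∀ x y : X, dist x y < infDist x (rayIm b) →
    dist (π x) (π y) ≤ c * κ (dist o (π x))

/-!
The ray enters only through its image, a geodesically convex set `A` with a nearest-point projection
`x ↦ x_A`. Assume that `A` is contracting with bound `f(‖x‖)`, where `f = c • κ`, and let
`d(x, y) ≤ d(x, A)`, `D = d(x_A, y_A)`. Sliding `x` along `[x_A, x]` and `y` along `[y_A, y]` does
not change the projections, and comparison with the Euclidean plane shows that they can be brought
to height `O(D)` above `A` so that either `d(x, y) ≤ d(x, A) + d(y, A)` or
`d(x, y) ≤ d(x, A) + D / 2`. As the projection is `1`-Lipschitz, both cases give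
`D ≤ 2 f(‖x_A‖ + 9 D)`, and sublinearity of `κ` absorbs the summand `9 D`. Conversely
`‖x_A‖ ≤ 2 ‖x‖ + d(𝔬, A)`, so that `κ(‖x_A‖)` is bounded by a multiple of `κ(‖x‖)`.
-/

section Real

variable {κ : ℝ → ℝ}

-- The supremum `M` satisfies `M ≤ M / 2`, as each `t` is the midpoint of a segment in `[0, 1]` that
-- has `0` or `1` as an endpoint.
lemma nonpos_of_midpoint_le {g : ℝ → ℝ} (hbdd : BddAbove (g '' Icc 0 1)) (h0 : g 0 ≤ 0)
    (h1 : g 1 ≤ 0)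
    (hmid : ∀ s ∈ Icc (0 : ℝ) 1, ∀ t ∈ Icc (0 : ℝ) 1, g ((s + t) / 2) ≤ (g s + g t) / 2)
    {t : ℝ} (ht : t ∈ Icc (0 : ℝ) 1) : g t ≤ 0 := by
  set M := sSup (g '' Icc 0 1)
  have le_M {s : ℝ} (hs : s ∈ Icc (0 : ℝ) 1) : g s ≤ M := le_csSup hbdd (mem_image_of_mem g hs)
  have le_half_M {s : ℝ} (hs : s ∈ Icc (0 : ℝ) 1) : g s ≤ M / 2 := by
    rcases le_total s (1 / 2) with hs' | hs'
    · have hs2 : 2 * s ∈ Icc (0 : ℝ) 1 := ⟨by linarith [hs.1], by linarith⟩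
      have := hmid 0 (by simp) (2 * s) hs2
      rw [show (0 + 2 * s) / 2 = s by ring] at this
      linarith [le_M hs2]
    · have hs2 : 2 * s - 1 ∈ Icc (0 : ℝ) 1 := ⟨by linarith, by linarith [hs.2]⟩
      have := hmid (2 * s - 1) hs2 1 (by simp)
      rw [show (2 * s - 1 + 1) / 2 = s by ring] at this
      linarith [le_M hs2]
  have hM : M ≤ M / 2 :=
    csSup_le ((nonempty_Icc.2 zero_le_one).image g) (forall_mem_image.2 fun _ hs => le_half_M hs)
  linarith [le_M ht]

lemma map_add_le_of_concaveOn_Ici (hκ : ConcaveOn ℝ (Ici 0) κ) (h0 : 0 ≤ κ 0) {s t : ℝ}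
    (hs : 0 ≤ s) (ht : 0 ≤ t) : κ (s + t) ≤ κ s + κ t := by
  rcases (add_nonneg hs ht).eq_or_lt with hst | hst
  · obtain ⟨rfl, rfl⟩ := (add_eq_zero_iff_of_nonneg hs ht).1 hst.symm
    simpa using h0
  have mul_le {r : ℝ} (hr : 0 ≤ r) (hr' : r ≤ s + t) : r / (s + t) * κ (s + t) ≤ κ r := by
    have hle : r / (s + t) ≤ 1 := (div_le_one hst).2 hr'
    have := hκ.2 (mem_Ici.2 le_rfl) (mem_Ici.2 hst.le) (sub_nonneg.2 hle)
      (div_nonneg hr hst.le) (sub_add_cancel _ _)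
    simp only [smul_eq_mul, mul_zero, zero_add, div_mul_cancel₀ r hst.ne'] at this
    linarith [mul_nonneg (sub_nonneg.2 hle) h0]
  calc κ (s + t) = s / (s + t) * κ (s + t) + t / (s + t) * κ (s + t) := by field_simp
    _ ≤ κ s + κ t := add_le_add (mul_le hs (by linarith)) (mul_le ht (by linarith))

namespace IsSublinearFn

lemma nonneg (hκ : IsSublinearFn κ) (t : ℝ) : 0 ≤ κ t := zero_le_one.trans (hκ.one_le t)

lemma map_add_le (hκ : IsSublinearFn κ) {s t : ℝ} (hs : 0 ≤ s) (ht : 0 ≤ t) :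
    κ (s + t) ≤ κ s + κ t :=
  map_add_le_of_concaveOn_Ici hκ.concave (hκ.nonneg 0) hs ht

lemma exists_le_mul_add (hκ : IsSublinearFn κ) {ε : ℝ} (hε : 0 < ε) :
    ∃ M ≥ 0, ∀ t ≥ 0, κ t ≤ ε * t + M := by
  obtain ⟨T, hT⟩ := ((hκ.sublinear.eventually (gt_mem_nhds hε)).and
    (eventually_gt_atTop 0)).exists_forall_of_atTop
  refine ⟨κ T, hκ.nonneg T, fun t ht => ?_⟩
  rcases le_total T t with hTt | htT
  · obtain ⟨hlt, htpos⟩ := hT t hTt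
    linarith [(div_lt_iff₀ htpos).1 hlt, hκ.nonneg T]
  · linarith [hκ.mono htT, mul_nonneg hε.le ht]

lemma exists_le_mul_of_le_mul_add (hκ : IsSublinearFn κ) {C N : ℝ} (hC : 0 ≤ C) (hN : 0 ≤ N) :
    ∃ C' > 0, ∀ a ≥ 0, ∀ D ≥ 0, D ≤ C * κ (a + N * D) → D ≤ C' * κ a := by
  obtain ⟨M, hM, hκM⟩ := hκ.exists_le_mul_add (ε := 1 / (2 * (C * N + 1))) (by positivity)
  refine ⟨2 * C * (1 + M) + 1, by positivity, fun a ha D hD hle => ?_⟩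
  have hsmall : C * (1 / (2 * (C * N + 1)) * (N * D)) ≤ D / 2 := by
    rw [show C * (1 / (2 * (C * N + 1)) * (N * D)) = C * N / (C * N + 1) * (D / 2) by field_simp]
    exact mul_le_of_le_one_left (by positivity) ((div_le_one (by positivity)).2 (by linarith))
  have habsorb : D ≤ C * κ a + D / 2 + C * M :=
    calc D ≤ C * κ (a + N * D) := hle
      _ ≤ C * (κ a + (1 / (2 * (C * N + 1)) * (N * D) + M)) := by
        gcongr
        exact (hκ.map_add_le ha (by positivity)).trans (by gcongr; exact hκM _ (by positivity))
      _ ≤ C * κ a + D / 2 + C * M := by linarith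
  calc D ≤ 2 * C * κ a + 2 * C * M * 1 := by linarith
    _ ≤ 2 * C * κ a + 2 * C * M * κ a := by gcongr; exact hκ.one_le a
    _ ≤ (2 * C * (1 + M) + 1) * κ a := by linarith [hκ.nonneg a]

end IsSublinearFn

end Real

section CAT0

variable {X : Type*} [MetricSpace X]

/-- `z` divides a geodesic segment from `x` to `y` in the ratio `l : (1 - l)`; this is the metric
counterpart of `z = AffineMap.lineMap x y l`. -/
structure DividesSeg (l : ℝ) (x y z : X) : Prop where
  mem_Icc : l ∈ Icc (0 : ℝ) 1
  dist_left : dist x z = l * dist x y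
  dist_right : dist z y = (1 - l) * dist x y

/-- Geodesic convexity of a subset of `X`, in terms of the segments `seg x y`. -/
def SegConvex (A : Set X) : Prop :=
  ∀ x ∈ A, ∀ y ∈ A, seg x y ⊆ A

/-- `π` is a nearest-point projection onto `A`; for `A = rayIm b` this is `IsProj b π`. -/
def IsNearestPointProj (A : Set X) (π : X → X) : Prop :=
  ∀ x, π x ∈ A ∧ dist x (π x) = infDist x A

/-- Balls centred at `x` that miss `A` have projections to `A` of radius at most `f(‖x‖)`, where
`‖x‖ = dist o x`; for `f = c • κ` and `A = rayIm b` this is `κ`-contraction with constant `c`. -/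
def ContractingWithGauge (f : ℝ → ℝ) (o : X) (A : Set X) (π : X → X) : Prop :=
  ∀ x y, dist x y ≤ infDist x A → dist (π x) (π y) ≤ f (dist o x)

variable {l δ ε : ℝ} {p q u v x y z : X}

lemma DividesSeg.symm (hz : DividesSeg l x y z) : DividesSeg (1 - l) y x z where
  mem_Icc := ⟨sub_nonneg.2 hz.mem_Icc.2, sub_le_self 1 hz.mem_Icc.1⟩
  dist_left := by rw [dist_comm, hz.dist_right, dist_comm x y]
  dist_right := by rw [dist_comm, hz.dist_left, dist_comm x y, _root_.sub_sub_cancel]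

lemma mem_seg_iff_exists_dividesSeg : z ∈ seg x y ↔ ∃ l, DividesSeg l x y z := by
  constructor
  · intro (hz : dist x z + dist z y = dist x y)
    rcases eq_or_ne (dist x y) 0 with hxy | hxy
    · refine ⟨0, by simp, ?_, ?_⟩ <;>
        linarith [dist_nonneg (x := x) (y := z), dist_nonneg (x := z) (y := y)]
    · refine ⟨dist x z / dist x y, ⟨by positivity, div_le_one_of_le₀ ?_ dist_nonneg⟩, ?_, ?_⟩
      · linarith [dist_nonneg (x := z) (y := y)]
      · rw [div_mul_cancel₀ _ hxy]
      · rw [sub_mul, div_mul_cancel₀ _ hxy, ← hz]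
        ring
  · rintro ⟨l, hz⟩
    change dist x z + dist z y = dist x y
    rw [hz.dist_left, hz.dist_right]
    ring

namespace GeodesicSpace

lemma exists_constant_speed (hX : GeodesicSpace X) (x y : X) :
    ∃ γ : ℝ → X, γ 0 = x ∧ γ 1 = y ∧
      ∀ s ∈ Icc (0 : ℝ) 1, ∀ t ∈ Icc (0 : ℝ) 1, dist (γ s) (γ t) = |s - t| * dist x y := by
  obtain ⟨γ, hγ0, hγ1, hγ⟩ := hX x y
  have mul_mem {t : ℝ} (ht : t ∈ Icc (0 : ℝ) 1) : t * dist x y ∈ Icc 0 (dist x y) :=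
    ⟨mul_nonneg ht.1 dist_nonneg, mul_le_of_le_one_left dist_nonneg ht.2⟩
  refine ⟨fun t => γ (t * dist x y), by simpa using hγ0, by simpa using hγ1, fun s hs t ht => ?_⟩
  rw [hγ _ (mul_mem hs) _ (mul_mem ht), ← sub_mul, abs_mul, abs_of_nonneg dist_nonneg]

lemma exists_dividesSeg (hX : GeodesicSpace X) (x y : X) (hl : l ∈ Icc (0 : ℝ) 1) :
    ∃ z, DividesSeg l x y z := by
  obtain ⟨γ, rfl, rfl, hγ⟩ := hX.exists_constant_speed x y
  refine ⟨γ l, hl, ?_, ?_⟩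
  · rw [hγ 0 (by simp) l hl, zero_sub, abs_neg, abs_of_nonneg hl.1]
  · rw [hγ l hl 1 (by simp), abs_sub_comm, abs_of_nonneg (sub_nonneg.2 hl.2)]

lemma exists_dist_le_le (hX : GeodesicSpace X) (hδ : 0 ≤ δ) (hε : 0 ≤ ε)
    (h : dist x y ≤ δ + ε) : ∃ w, dist x w ≤ δ ∧ dist w y ≤ ε := by
  rcases le_or_gt (dist x y) δ with hxy | hxy
  · exact ⟨y, hxy, by simpa using hε⟩
  · have hpos : 0 < dist x y := hδ.trans_lt hxy
    obtain ⟨w, hw⟩ := hX.exists_dividesSeg x y (l := δ / dist x y)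
      ⟨by positivity, (div_le_one hpos).2 hxy.le⟩
    refine ⟨w, ?_, ?_⟩
    · rw [hw.dist_left, div_mul_cancel₀ _ hpos.ne']
    · rw [hw.dist_right, sub_mul, div_mul_cancel₀ _ hpos.ne']
      linarith

lemma dist_map_le_add_of_forall_dist_lt (hX : GeodesicSpace X) {Y : Type*} [PseudoMetricSpace Y]
    {f : X → Y} (hf : LipschitzWith 1 f) {R M : ℝ} (hM : 0 ≤ M) (hε : 0 ≤ ε)
    (hball : ∀ w, dist x w < R → dist (f x) (f w) ≤ M) (hxy : dist x y ≤ R + ε) :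
    dist (f x) (f y) ≤ M + ε := by
  have hf' (a b : X) : dist (f a) (f b) ≤ dist a b := by simpa using hf.dist_le_mul a b
  rcases le_or_gt R 0 with hR | hR
  · linarith [hf' x y]
  refine le_of_forall_pos_le_add fun η hη => ?_
  obtain ⟨w, hxw, hwy⟩ := hX.exists_dist_le_le (δ := max 0 (R - η)) (ε := ε + η) (x := x) (y := y)
    (le_max_left _ _) (by positivity) (by linarith [le_max_right 0 (R - η)])
  have hxw' : dist x w < R := hxw.trans_lt (max_lt hR (by linarith))
  linarith [dist_triangle (f x) (f w) (f y), hball w hxw', hf' w y]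

end GeodesicSpace

namespace IsCAT0

lemma dist_sq_le_of_constant_speed (hX : IsCAT0 X) {γ : ℝ → X}
    (hγ : ∀ s ∈ Icc (0 : ℝ) 1, ∀ t ∈ Icc (0 : ℝ) 1,
      dist (γ s) (γ t) = |s - t| * dist (γ 0) (γ 1))
    (u : X) (hl : l ∈ Icc (0 : ℝ) 1) :
    dist u (γ l) ^ 2 ≤ (1 - l) * dist u (γ 0) ^ 2 + l * dist u (γ 1) ^ 2
      - l * (1 - l) * dist (γ 0) (γ 1) ^ 2 := by
  set L := dist (γ 0) (γ 1)
  let defect (t : ℝ) : ℝ :=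
    dist u (γ t) ^ 2 - ((1 - t) * dist u (γ 0) ^ 2 + t * dist u (γ 1) ^ 2 - t * (1 - t) * L ^ 2)
  suffices hdefect : defect l ≤ 0 from sub_nonpos.1 hdefect
  refine nonpos_of_midpoint_le ?_ (by simp [defect]) (by simp [defect]) (fun s hs t ht => ?_) hl
  · refine ⟨(dist u (γ 0) + L) ^ 2 + L ^ 2, forall_mem_image.2 fun t ht => ?_⟩
    have hdist : dist u (γ t) ≤ dist u (γ 0) + L := by
      have := hγ 0 (by simp) t ht
      rw [zero_sub, abs_neg, abs_of_nonneg ht.1] at this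
      linarith [dist_triangle u (γ 0) (γ t), mul_le_of_le_one_left (dist_nonneg : 0 ≤ L) ht.2]
    have hsq : dist u (γ t) ^ 2 ≤ (dist u (γ 0) + L) ^ 2 := by gcongr
    have hcoef : t * (1 - t) * L ^ 2 ≤ 1 * L ^ 2 := by
      gcongr
      nlinarith [ht.1, ht.2]
    have := mul_nonneg (sub_nonneg.2 ht.2) (sq_nonneg (dist u (γ 0)))
    have := mul_nonneg ht.1 (sq_nonneg (dist u (γ 1)))
    simp only [defect]
    linarith
  · have hm : (s + t) / 2 ∈ Icc (0 : ℝ) 1 := ⟨by linarith [hs.1, ht.1], by linarith [hs.2, ht.2]⟩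
    have hCN := hX.2 u (γ s) (γ t) (γ ((s + t) / 2))
      (by rw [hγ _ hs _ hm, hγ _ hs _ ht, show s - (s + t) / 2 = (s - t) / 2 by ring, abs_div,
        abs_two, div_mul_eq_mul_div])
      (by rw [hγ _ hm _ ht, hγ _ hs _ ht, show (s + t) / 2 - t = (s - t) / 2 by ring, abs_div,
        abs_two, div_mul_eq_mul_div])
    rw [hγ _ hs _ ht, mul_pow, sq_abs] at hCN
    simp only [defect]
    linarith

-- Applied to `u = z`, the inequality along a geodesic `γ` from `x` to `y` yields `z = γ l`.
lemma dist_sq_le_of_dividesSeg (hX : IsCAT0 X) (hz : DividesSeg l x y z) (u : X) :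
    dist u z ^ 2 ≤ (1 - l) * dist u x ^ 2 + l * dist u y ^ 2 - l * (1 - l) * dist x y ^ 2 := by
  obtain ⟨γ, rfl, rfl, hγ⟩ := hX.1.exists_constant_speed x y
  have hzγ : dist z (γ l) ^ 2 ≤ 0 := by
    have := hX.dist_sq_le_of_constant_speed hγ z hz.mem_Icc
    rw [dist_comm z (γ 0), hz.dist_left, hz.dist_right] at this
    linarith
  rw [dist_eq_zero.1 ((sq_nonpos_iff _).1 hzγ)]
  exact hX.dist_sq_le_of_constant_speed hγ u hz.mem_Icc

lemma eq_of_dividesSeg (hX : IsCAT0 X) {z' : X} (hz : DividesSeg l x y z)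
    (hz' : DividesSeg l x y z') : z = z' := by
  have hle := hX.dist_sq_le_of_dividesSeg hz' z
  rw [dist_comm z x, hz.dist_left, hz.dist_right] at hle
  exact dist_eq_zero.1 ((sq_nonpos_iff _).1 (by linarith))

lemma dist_le_mul_of_dividesSeg_of_dividesSeg (hX : IsCAT0 X) (hu : DividesSeg l p x u)
    (hv : DividesSeg l p y v) : dist u v ≤ l * dist x y := by
  have hyu := hX.dist_sq_le_of_dividesSeg hu y
  have huv := hX.dist_sq_le_of_dividesSeg hv u
  rw [dist_comm u p, hu.dist_left, dist_comm u y] at huv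
  rw [dist_comm y p, dist_comm y x] at hyu
  refine le_of_sq_le_sq ?_ (mul_nonneg hu.mem_Icc.1 dist_nonneg)
  linarith [mul_le_mul_of_nonneg_left hyu hu.mem_Icc.1]

lemma dist_le_of_dividesSeg_of_dividesSeg (hX : IsCAT0 X) (hu : DividesSeg l p x u)
    (hv : DividesSeg l q y v) : dist u v ≤ (1 - l) * dist p q + l * dist x y := by
  obtain ⟨w, hw⟩ := hX.1.exists_dividesSeg q x hu.mem_Icc
  calc dist u v ≤ dist u w + dist w v := dist_triangle u w v
    _ ≤ (1 - l) * dist p q + l * dist x y :=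
      add_le_add (hX.dist_le_mul_of_dividesSeg_of_dividesSeg hu.symm hw.symm)
        (hX.dist_le_mul_of_dividesSeg_of_dividesSeg hw hv)

lemma dist_sq_le_of_dividesSeg_of_dist_le (hX : IsCAT0 X) (hz : DividesSeg l p x z)
    (hxy : dist x y ≤ dist p x) : dist z y ^ 2 ≤ dist p z ^ 2 + dist p y ^ 2 := by
  have hyz := hX.dist_sq_le_of_dividesSeg hz y
  rw [dist_comm y z, dist_comm y p, dist_comm y x] at hyz
  have hsq : l * dist x y ^ 2 ≤ l * dist p x ^ 2 :=
    mul_le_mul_of_nonneg_left (by gcongr) hz.mem_Icc.1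
  rw [hz.dist_left]
  linarith [mul_nonneg hz.mem_Icc.1 (sq_nonneg (dist p y))]

lemma dist_sq_add_dist_sq_le (hX : IsCAT0 X) (x y z w : X) :
    dist x z ^ 2 + dist y w ^ 2 ≤
      dist x y ^ 2 + dist y z ^ 2 + dist z w ^ 2 + dist w x ^ 2 := by
  obtain ⟨m, hm⟩ := hX.1.exists_dividesSeg x z (l := 1 / 2) (by norm_num)
  have hym := hX.dist_sq_le_of_dividesSeg hm y
  have hwm := hX.dist_sq_le_of_dividesSeg hm w
  have hyw : dist y w ^ 2 ≤ 2 * (dist y m ^ 2 + dist w m ^ 2) :=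
    (pow_le_pow_left₀ dist_nonneg (dist_triangle_right y w m) 2).trans add_sq_le
  rw [dist_comm y x] at hym
  rw [dist_comm w z] at hwm
  linarith

end IsCAT0

lemma IsGeodesicRay.dividesSeg {b : ℝ → X} (hb : IsGeodesicRay b) {s t : ℝ} (hs : 0 ≤ s)
    (ht : 0 ≤ t) (hl : l ∈ Icc (0 : ℝ) 1) :
    DividesSeg l (b s) (b t) (b ((1 - l) * s + l * t)) := by
  have hl' : 0 ≤ 1 - l := sub_nonneg.2 hl.2
  have hr : 0 ≤ (1 - l) * s + l * t := add_nonneg (mul_nonneg hl' hs) (mul_nonneg hl.1 ht)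
  refine ⟨hl, ?_, ?_⟩
  · rw [hb _ _ hs hr, hb _ _ hs ht, show s - ((1 - l) * s + l * t) = l * (s - t) by ring, abs_mul,
      abs_of_nonneg hl.1]
  · rw [hb _ _ hr ht, hb _ _ hs ht, show (1 - l) * s + l * t - t = (1 - l) * (s - t) by ring,
      abs_mul, abs_of_nonneg hl']

lemma IsGeodesicRay.segConvex_rayIm (hX : IsCAT0 X) {b : ℝ → X} (hb : IsGeodesicRay b) :
    SegConvex (rayIm b) := by
  rintro _ ⟨s, hs, rfl⟩ _ ⟨t, ht, rfl⟩ z hz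
  obtain ⟨l, hz⟩ := mem_seg_iff_exists_dividesSeg.1 hz
  refine ⟨(1 - l) * s + l * t, ?_, hX.eq_of_dividesSeg (hb.dividesSeg hs ht hz.mem_Icc) hz⟩
  exact add_nonneg (mul_nonneg (sub_nonneg.2 hz.mem_Icc.2) hs) (mul_nonneg hz.mem_Icc.1 ht)

variable {A : Set X} {π : X → X} {o : X} {f : ℝ → ℝ}

namespace IsNearestPointProj

lemma infDist_eq_of_dividesSeg (hπ : IsNearestPointProj A π) (hz : DividesSeg l (π x) x z) :
    infDist z A = l * infDist x A := by
  have hleft := hz.dist_left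
  have hright := hz.dist_right
  rw [dist_comm (π x) x, (hπ x).2] at hleft hright
  have hxz : infDist x A ≤ infDist z A + dist z x := dist_comm z x ▸ infDist_le_infDist_add_dist
  have hzp : infDist z A ≤ dist (π x) z := dist_comm z (π x) ▸ infDist_le_dist_of_mem (hπ x).1
  linarith

lemma dist_le_dist_proj_add (hπ : IsNearestPointProj A π) (o x : X) :
    dist o x ≤ dist o (π x) + infDist x A := by
  rw [← (hπ x).2, dist_comm x]
  exact dist_triangle o (π x) x

lemma dist_proj_le (hπ : IsNearestPointProj A π) (o x : X) :
    dist o (π x) ≤ 2 * dist o x + infDist o A := by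
  have hxA : infDist x A ≤ infDist o A + dist x o := infDist_le_infDist_add_dist
  rw [dist_comm x o] at hxA
  linarith [dist_triangle o x (π x), (hπ x).2]

lemma map_dist_proj_le (hπ : IsNearestPointProj A π) {κ : ℝ → ℝ} (hκ : IsSublinearFn κ)
    (o x : X) : κ (dist o (π x)) ≤ (2 + κ (infDist o A)) * κ (dist o x) := by
  have hd : 0 ≤ dist o x := dist_nonneg
  calc κ (dist o (π x)) ≤ κ (dist o x + dist o x + infDist o A) :=
        hκ.mono (by linarith [hπ.dist_proj_le o x])
    _ ≤ κ (dist o x) + κ (dist o x) + κ (infDist o A) * 1 := by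
        rw [mul_one]
        exact (hκ.map_add_le (by positivity) infDist_nonneg).trans
          (add_le_add_left (hκ.map_add_le hd hd) _)
    _ ≤ κ (dist o x) + κ (dist o x) + κ (infDist o A) * κ (dist o x) := by
        gcongr
        exacts [hκ.nonneg _, hκ.one_le _]
    _ = (2 + κ (infDist o A)) * κ (dist o x) := by ring

lemma infDist_sq_add_dist_sq_le (hπ : IsNearestPointProj A π) (hX : IsCAT0 X) (hA : SegConvex A)
    (x : X) (hq : q ∈ A) : infDist x A ^ 2 + dist (π x) q ^ 2 ≤ dist x q ^ 2 := by
  have hlim : Tendsto (fun l : ℝ => infDist x A ^ 2 + (1 - l) * dist (π x) q ^ 2)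
      (nhdsWithin 0 (Ioi 0)) (nhds (infDist x A ^ 2 + dist (π x) q ^ 2)) :=
    (Continuous.tendsto' (by fun_prop) _ _ (by ring)).mono_left nhdsWithin_le_nhds
  refine le_of_tendsto hlim ?_
  filter_upwards [Ioc_mem_nhdsGT one_pos] with l hl
  obtain ⟨z, hz⟩ := hX.1.exists_dividesSeg (π x) q (Ioc_subset_Icc_self hl)
  have hzA : z ∈ A := hA _ (hπ x).1 _ hq (mem_seg_iff_exists_dividesSeg.2 ⟨l, hz⟩)
  have hxz : infDist x A ^ 2 ≤ dist x z ^ 2 :=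
    pow_le_pow_left₀ infDist_nonneg (infDist_le_dist_of_mem hzA) 2
  have hstewart := hX.dist_sq_le_of_dividesSeg hz x
  rw [(hπ x).2] at hstewart
  refine le_of_mul_le_mul_left ?_ hl.1
  linarith

lemma eq_of_dist_eq_infDist (hπ : IsNearestPointProj A π) (hX : IsCAT0 X) (hA : SegConvex A)
    (hq : q ∈ A) (hxq : dist x q = infDist x A) : π x = q := by
  have hpyth := hπ.infDist_sq_add_dist_sq_le hX hA x hq
  rw [hxq] at hpyth
  exact dist_eq_zero.1 ((sq_nonpos_iff _).1 (by linarith))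

lemma proj_eq_of_dividesSeg (hπ : IsNearestPointProj A π) (hX : IsCAT0 X) (hA : SegConvex A)
    (hz : DividesSeg l (π x) x z) : π z = π x := by
  refine hπ.eq_of_dist_eq_infDist hX hA (hπ x).1 ?_
  rw [hπ.infDist_eq_of_dividesSeg hz, dist_comm, hz.dist_left, dist_comm, (hπ x).2]

lemma lipschitzWith_one (hπ : IsNearestPointProj A π) (hX : IsCAT0 X) (hA : SegConvex A) :
    LipschitzWith 1 π := by
  refine LipschitzWith.mk_one fun x y => le_of_sq_le_sq ?_ dist_nonneg
  have hx := hπ.infDist_sq_add_dist_sq_le hX hA x (hπ y).1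
  have hy := hπ.infDist_sq_add_dist_sq_le hX hA y (hπ x).1
  have hquad := hX.dist_sq_add_dist_sq_le x y (π y) (π x)
  rw [(hπ y).2, dist_comm (π x) x, (hπ x).2, dist_comm (π y)] at hquad
  rw [dist_comm (π y)] at hy
  linarith

-- After sliding `x` down to height `r`, its distance to `y` is at most
-- `√(r ^ 2 + d(π x, y) ^ 2) ≤ r + ε`.
lemma exists_proj_eq_infDist_le_dist_le (hπ : IsNearestPointProj A π) (hX : IsCAT0 X)
    (hA : SegConvex A) {r : ℝ} (hr : 0 ≤ r) (hε : 0 ≤ ε) (hxy : dist x y ≤ infDist x A)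
    (hy : dist (π x) y ^ 2 ≤ 2 * r * ε + ε ^ 2) :
    ∃ x', π x' = π x ∧ infDist x' A ≤ r ∧ dist x' y ≤ infDist x' A + ε := by
  rcases le_or_gt (infDist x A) r with hxr | hrx
  · exact ⟨x, rfl, hxr, by linarith⟩
  have hpos : 0 < infDist x A := hr.trans_lt hrx
  obtain ⟨x', hx'⟩ := hX.1.exists_dividesSeg (π x) x (l := r / infDist x A)
    ⟨by positivity, (div_le_one hpos).2 hrx.le⟩
  have hpx : dist (π x) x = infDist x A := dist_comm x (π x) ▸ (hπ x).2
  have hheight : infDist x' A = r := by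
    rw [hπ.infDist_eq_of_dividesSeg hx', div_mul_cancel₀ _ hpos.ne']
  have hpx' : dist (π x) x' = r := by rw [hx'.dist_left, hpx, div_mul_cancel₀ _ hpos.ne']
  refine ⟨x', hπ.proj_eq_of_dividesSeg hX hA hx', hheight.le, ?_⟩
  rw [hheight]
  refine le_of_sq_le_sq ?_ (by positivity)
  calc dist x' y ^ 2 ≤ r ^ 2 + dist (π x) y ^ 2 :=
        hpx' ▸ hX.dist_sq_le_of_dividesSeg_of_dist_le hx' (hxy.trans_eq hpx.symm)
    _ ≤ (r + ε) ^ 2 := by linarith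

-- Both points are contracted towards their projections by the factor `2 D / d(y, A)`, where
-- `D = d(π x, π y)`: by convexity of the metric, the error `d(y, A) / 2` becomes `D`, and the
-- distance of the projections contributes at most another `D`.
lemma exists_proj_eq_dist_le_infDist_add_infDist (hπ : IsNearestPointProj A π) (hX : IsCAT0 X)
    (hA : SegConvex A) {M : ℝ} (hx : infDist x A ≤ M * infDist y A)
    (hxy : dist x y ≤ infDist x A + infDist y A / 2)
    (hfar : 2 * dist (π x) (π y) < infDist y A) :
    ∃ u v, π u = π x ∧ π v = π y ∧ infDist u A ≤ M * (2 * dist (π x) (π y)) ∧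
      infDist v A = 2 * dist (π x) (π y) ∧ dist u v ≤ infDist u A + infDist v A := by
  set D := dist (π x) (π y)
  set h := infDist y A
  have hD : 0 ≤ D := dist_nonneg
  have hpos : 0 < h := by linarith
  set l := 2 * D / h
  have hlh : l * h = 2 * D := div_mul_cancel₀ _ hpos.ne'
  have hl : l ∈ Icc (0 : ℝ) 1 := ⟨by positivity, (div_le_one hpos).2 hfar.le⟩
  obtain ⟨u, hu⟩ := hX.1.exists_dividesSeg (π x) x hl
  obtain ⟨v, hv⟩ := hX.1.exists_dividesSeg (π y) y hl
  have huA : infDist u A = l * infDist x A := hπ.infDist_eq_of_dividesSeg hu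
  have hvA : infDist v A = 2 * D := (hπ.infDist_eq_of_dividesSeg hv).trans hlh
  refine ⟨u, v, hπ.proj_eq_of_dividesSeg hX hA hu, hπ.proj_eq_of_dividesSeg hX hA hv, ?_, hvA, ?_⟩
  · linarith [mul_le_mul_of_nonneg_left hx hl.1, congrArg (M * ·) hlh]
  · calc dist u v ≤ (1 - l) * D + l * dist x y := hX.dist_le_of_dividesSeg_of_dividesSeg hu hv
      _ ≤ 1 * D + l * (infDist x A + h / 2) := by
        gcongr
        linarith [hl.1]
      _ = infDist u A + infDist v A := by
        rw [huA, hvA]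
        linarith

end IsNearestPointProj

namespace ContractingWithGauge

lemma nonneg (hf : ContractingWithGauge f o A π) (x : X) : 0 ≤ f (dist o x) :=
  dist_nonneg.trans (hf x x (by simpa using infDist_nonneg))

lemma dist_proj_le_add (hf : ContractingWithGauge f o A π) (hX : IsCAT0 X) (hA : SegConvex A)
    (hπ : IsNearestPointProj A π) (hε : 0 ≤ ε) (hxy : dist x y ≤ infDist x A + ε) :
    dist (π x) (π y) ≤ f (dist o x) + ε :=
  hX.1.dist_map_le_add_of_forall_dist_lt (hπ.lipschitzWith_one hX hA) (hf.nonneg x) hε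
    (fun w hw => hf x w hw.le) hxy

lemma dist_proj_le_of_dist_le_infDist_add_infDist (hf : ContractingWithGauge f o A π)
    (hX : GeodesicSpace X) (hxy : dist x y ≤ infDist x A + infDist y A) :
    dist (π x) (π y) ≤ f (dist o x) + f (dist o y) := by
  obtain ⟨w, hxw, hwy⟩ := hX.exists_dist_le_le infDist_nonneg infDist_nonneg hxy
  exact (dist_triangle_right _ _ (π w)).trans
    (add_le_add (hf x w hxw) (hf y w (dist_comm w y ▸ hwy)))

lemma dist_proj_le_of_infDist_le (hf : ContractingWithGauge f o A π) (hmono : Monotone f)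
    (hX : IsCAT0 X) (hA : SegConvex A) (hπ : IsNearestPointProj A π)
    (hxy : dist x y ≤ infDist x A) (hnear : infDist y A ≤ 2 * dist (π x) (π y)) :
    dist (π x) (π y) ≤ 2 * f (dist o (π x) + 9 * dist (π x) (π y)) := by
  set D := dist (π x) (π y)
  have hD : 0 ≤ D := dist_nonneg
  have hpy : dist (π x) y ^ 2 ≤ (3 * D) ^ 2 := by
    gcongr
    linarith [dist_triangle_right (π x) y (π y), (hπ y).2]
  obtain ⟨x', hproj, hheight, hdist⟩ := hπ.exists_proj_eq_infDist_le_dist_le hX hA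
    (r := 9 * D) (ε := D / 2) (by positivity) (div_nonneg hD zero_le_two) hxy
    (by linarith [sq_nonneg D])
  have hx' : dist o x' ≤ dist o (π x) + 9 * D := by
    linarith [hproj ▸ hπ.dist_le_dist_proj_add o x']
  have hle : D ≤ f (dist o x') + D / 2 := by
    simpa only [hproj] using hf.dist_proj_le_add hX hA hπ (div_nonneg hD zero_le_two) hdist
  linarith [hmono hx']

lemma dist_proj_le_of_lt_infDist (hf : ContractingWithGauge f o A π) (hmono : Monotone f)
    (hX : IsCAT0 X) (hA : SegConvex A) (hπ : IsNearestPointProj A π)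
    (hxy : dist x y ≤ infDist x A) (hfar : 2 * dist (π x) (π y) < infDist y A) :
    dist (π x) (π y) ≤ 2 * f (dist o (π x) + 4 * dist (π x) (π y)) := by
  set D := dist (π x) (π y)
  set h := infDist y A
  have hD : 0 ≤ D := dist_nonneg
  have hh : 0 ≤ h := infDist_nonneg
  have hpy : dist (π x) y ^ 2 ≤ (3 / 2 * h) ^ 2 := by
    gcongr
    linarith [dist_triangle_right (π x) y (π y), (hπ y).2]
  obtain ⟨x', hproj, hheight, hdist⟩ := hπ.exists_proj_eq_infDist_le_dist_le hX hA
    (r := 2 * h) (ε := h / 2) (by positivity) (by positivity) hxy (by linarith)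
  obtain ⟨u, v, hπu, hπv, huA, hvA, huv⟩ :=
    hπ.exists_proj_eq_dist_le_infDist_add_infDist hX hA hheight hdist (by rwa [hproj])
  rw [hproj] at hπu huA hvA
  have hou : dist o u ≤ dist o (π x) + 4 * D := by
    linarith [hπu ▸ hπ.dist_le_dist_proj_add o u]
  have hov : dist o v ≤ dist o (π x) + 4 * D := by
    linarith [hπv ▸ hπ.dist_le_dist_proj_add o v, hD, dist_triangle o (π x) (π y)]
  have hle := hf.dist_proj_le_of_dist_le_infDist_add_infDist hX.1 huv
  rw [hπu, hπv] at hle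
  linarith [hmono hou, hmono hov]

lemma dist_proj_le (hf : ContractingWithGauge f o A π) (hmono : Monotone f) (hX : IsCAT0 X)
    (hA : SegConvex A) (hπ : IsNearestPointProj A π) (hxy : dist x y ≤ infDist x A) :
    dist (π x) (π y) ≤ 2 * f (dist o (π x) + 9 * dist (π x) (π y)) := by
  rcases le_or_gt (infDist y A) (2 * dist (π x) (π y)) with hnear | hfar
  · exact hf.dist_proj_le_of_infDist_le hmono hX hA hπ hxy hnear
  · refine (hf.dist_proj_le_of_lt_infDist hmono hX hA hπ hxy hfar).trans ?_
    gcongr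
    exact hmono (by gcongr; norm_num)

end ContractingWithGauge

theorem kappaContracting_iff_proj_form_general (hX : IsCAT0 X) (o : X) {κ : ℝ → ℝ}
    (hκ : IsSublinearFn κ) (hA : SegConvex A) (hπ : IsNearestPointProj A π) :
    (∃ c ≥ (0 : ℝ), ∀ x y : X, dist x y ≤ infDist x A → dist (π x) (π y) ≤ c * κ (dist o x)) ↔
      ∃ c > (0 : ℝ), ∀ x y : X, dist x y < infDist x A →
        dist (π x) (π y) ≤ c * κ (dist o (π x)) := by
  constructor
  · rintro ⟨c, hc, hcontr⟩
    have hf : ContractingWithGauge (fun t => c * κ t) o A π := hcontr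
    obtain ⟨C, hC, habsorb⟩ :=
      hκ.exists_le_mul_of_le_mul_add (C := 2 * c) (N := 9) (by positivity) (by norm_num)
    refine ⟨C, hC, fun x y hxy => habsorb _ dist_nonneg _ dist_nonneg ?_⟩
    rw [mul_assoc]
    exact hf.dist_proj_le (hκ.mono.const_mul hc) hX hA hπ hxy.le
  · rintro ⟨c, hc, hproj⟩
    refine ⟨c * (2 + κ (infDist o A)), mul_nonneg hc.le (by linarith [hκ.nonneg (infDist o A)]),
      fun x y hxy => ?_⟩
    have hle : dist (π x) (π y) ≤ c * κ (dist o (π x)) + 0 :=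
      hX.1.dist_map_le_add_of_forall_dist_lt (hπ.lipschitzWith_one hX hA)
        (mul_nonneg hc.le (hκ.nonneg _)) le_rfl (hproj x) (by rwa [add_zero])
    rw [add_zero] at hle
    rw [mul_assoc]
    exact hle.trans (mul_le_mul_of_nonneg_left (hπ.map_dist_proj_le hκ o x) hc.le)

end CAT0

/-- Lemma 2.6. In a proper CAT(0) space, a geodesic ray `b` is
`κ`-contracting iff there is `c > 0` such that `d(x,y) < d(x,b)` implies
`d(x_b, y_b) ≤ c·κ(‖x_b‖)`. -/
theorem kappaContracting_iff_proj_form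
    {X : Type*} [MetricSpace X] [ProperSpace X] (hX : IsCAT0 X)
    (o : X) (κ : ℝ → ℝ) (hκ : IsSublinearFn κ)
    (b : ℝ → X) (hb : IsGeodesicRay b) (hb0 : b 0 = o)
    (π : X → X) (hπ : IsProj b π) :
    KappaContracting κ o b π ↔
      ∃ c > (0:ℝ), ∀ x y : X, dist x y < infDist x (rayIm b) →
        dist (π x) (π y) ≤ c * κ (dist o (π x)) :=
  kappaContracting_iff_proj_form_general hX o hκ (hb.segConvex_rayIm hX) hπ
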